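/- (Proposition 4.) The function S : ℝ → ℝ defined by S(t₂) = g₁·(μ·Φ((μ−t₂)/σ₂) + (μ·F₁ + σ₁·f₁)·(1 − Φ((μ−t₂)/σ₂))) + g₂·(μ·F₁ + (μ·Φ((μ−t₂)/σ₂) + σ₂·φ((μ−t₂)/σ₂))·(1 − F₁)) attains a strict global maximum at the unique point t₂⁰ = −(g₁/g₂)·(μ − σ₁·f₁/(1 − F₁)); that is, S(t₂) < S(t₂⁰) for all t₂ ≠ t₂⁰. -/

import Mathlib

open Real

/-- Density of the standard normal distribution. -/
noncomputable def stdPdf (y : ℝ) : ℝ := (Real.sqrt (2 * Real.pi))⁻¹ * Real.exp (-(y ^ 2) / 2)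

/-- Cumulative distribution function of the standard normal distribution. -/
noncomputable def stdCdf (y : ℝ) : ℝ := ∫ x in Set.Iic y, stdPdf x

/-!
Only the proposals that Group 1 rejects depend on `t₂`. Let `X₂` be the mean increment of the
members of Group 2. When such a proposal is accepted, Group 2 gains `g₂ X₂` and Group 1 gains
`g₁ m` on average, where `m = μ - σ₁ f₁ / (1 - F₁)` is the mean increment of its members given
that it rejects. Since `t₂⁰ = -(g₁ / g₂) m`, up to a constant `S t₂` is
`g₂ (1 - F₁) 𝔼[X₂ - t₂⁰; X₂ > t₂]`, which is largest when exactly the proposals with `X₂ > t₂⁰`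
are accepted.
-/

open MeasureTheory ProbabilityTheory Set

theorem hasDerivAt_integral_Iic {E : Type*} [NormedAddCommGroup E] [NormedSpace ℝ E]
    [CompleteSpace E] {f : ℝ → E} {y : ℝ} (hint : Integrable f) (hcont : ContinuousAt f y) :
    HasDerivAt (fun z => ∫ x in Iic z, f x) (f y) y := by
  have hsplit : (fun z => ∫ x in Iic z, f x) =
      fun z => (∫ x in Iic y, f x) + ∫ x in y..z, f x := by
    funext z
    rw [← intervalIntegral.integral_Iic_sub_Iic hint.integrableOn hint.integrableOn,
      add_sub_cancel]
  rw [hsplit]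
  exact (intervalIntegral.integral_hasDerivAt_right hint.intervalIntegrable
    hint.aestronglyMeasurable.stronglyMeasurableAtFilter hcont).const_add _

theorem lt_of_hasDerivAt_of_pos_left_of_neg_right {f f' : ℝ → ℝ} {a x : ℝ}
    (hf : ∀ z, HasDerivAt f (f' z) z) (hpos : ∀ z < a, 0 < f' z) (hneg : ∀ z > a, f' z < 0)
    (hx : x ≠ a) : f x < f a := by
  have hcont : Continuous f := continuous_iff_continuousAt.2 fun z => (hf z).continuousAt
  rcases hx.lt_or_gt with hxa | hax
  · have hmono : StrictMonoOn f (Iic a) :=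
      strictMonoOn_of_hasDerivWithinAt_pos (convex_Iic a) hcont.continuousOn
        (fun z _ => (hf z).hasDerivWithinAt) fun z hz => hpos z (by rwa [interior_Iic] at hz)
    exact hmono hxa.le self_mem_Iic hxa
  · have hanti : StrictAntiOn f (Ici a) :=
      strictAntiOn_of_hasDerivWithinAt_neg (convex_Ici a) hcont.continuousOn
        (fun z _ => (hf z).hasDerivWithinAt) fun z hz => hneg z (by rwa [interior_Ici] at hz)
    exact hanti self_mem_Ici hax.le hax

theorem stdPdf_eq_gaussianPDFReal : stdPdf = gaussianPDFReal 0 1 := by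
  funext y
  simp [stdPdf, gaussianPDFReal]

theorem stdPdf_pos (y : ℝ) : 0 < stdPdf y := by
  unfold stdPdf
  positivity

theorem integrable_stdPdf : Integrable stdPdf :=
  stdPdf_eq_gaussianPDFReal ▸ integrable_gaussianPDFReal 0 1

theorem integral_stdPdf : ∫ x, stdPdf x = 1 :=
  stdPdf_eq_gaussianPDFReal ▸ integral_gaussianPDFReal_eq_one 0 one_ne_zero

theorem hasDerivAt_stdPdf (y : ℝ) : HasDerivAt stdPdf (-y * stdPdf y) y := by
  have hexponent : HasDerivAt (fun z : ℝ => -(z ^ 2) / 2) (-y) y :=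
    ((hasDerivAt_pow 2 y).fun_neg.div_const 2).congr_deriv (by norm_num; ring)
  exact (hexponent.exp.const_mul (√(2 * π))⁻¹).congr_deriv (by unfold stdPdf; ring)

theorem hasDerivAt_stdCdf (y : ℝ) : HasDerivAt stdCdf (stdPdf y) y :=
  hasDerivAt_integral_Iic integrable_stdPdf (hasDerivAt_stdPdf y).continuousAt

theorem strictMono_stdCdf : StrictMono stdCdf :=
  strictMono_of_hasDerivAt_pos hasDerivAt_stdCdf stdPdf_pos

theorem stdCdf_lt_one (y : ℝ) : stdCdf y < 1 :=
  calc
    stdCdf y < stdCdf (y + 1) := strictMono_stdCdf (lt_add_one y)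
    _ ≤ ∫ x, stdPdf x := setIntegral_le_integral integrable_stdPdf (.of_forall fun x =>
      (stdPdf_pos x).le)
    _ = 1 := integral_stdPdf

theorem mul_stdCdf_add_stdPdf_lt {a y : ℝ} (hy : y ≠ a) :
    a * stdCdf y + stdPdf y < a * stdCdf a + stdPdf a := by
  have hderiv (z : ℝ) :
      HasDerivAt (fun w => a * stdCdf w + stdPdf w) ((a - z) * stdPdf z) z :=
    (((hasDerivAt_stdCdf z).const_mul a).add (hasDerivAt_stdPdf z)).congr_deriv (by ring)
  exact lt_of_hasDerivAt_of_pos_left_of_neg_right hderiv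
    (fun z hz => mul_pos (sub_pos.2 hz) (stdPdf_pos z))
    (fun z hz => mul_neg_of_neg_of_pos (sub_neg.2 hz) (stdPdf_pos z)) hy

/-- The partial expectation `𝔼[X - c; X > t]` for `X` normal with mean `μ` and standard deviation
`σ > 0`, encoded by its closed form. It measures the benefit of accepting a proposal when `X > t`
if each acceptance costs `c`. -/
noncomputable def normalPartialExcess (μ σ c t : ℝ) : ℝ :=
  (μ - c) * stdCdf ((μ - t) / σ) + σ * stdPdf ((μ - t) / σ)

theorem normalPartialExcess_lt_self {μ σ c t : ℝ} (hσ : 0 < σ) (ht : t ≠ c) :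
    normalPartialExcess μ σ c t < normalPartialExcess μ σ c c := by
  have hscale (s : ℝ) : normalPartialExcess μ σ c s =
      σ * ((μ - c) / σ * stdCdf ((μ - s) / σ) + stdPdf ((μ - s) / σ)) := by
    unfold normalPartialExcess
    field_simp
  have hne : (μ - t) / σ ≠ (μ - c) / σ := by
    rwa [Ne, div_left_inj' hσ.ne', sub_right_inj]
  rw [hscale, hscale]
  exact mul_lt_mul_of_pos_left (mul_stdCdf_add_stdPdf_lt hne) hσ

theorem society_max_unanimous_rejection_general
    (μ σ₁ σ₂ : ℝ) (hσ₂ : 0 < σ₂) (g₁ g₂ : ℝ) (hg₂ : 0 < g₂) (F₁ f₁ : ℝ) (hF₁ : F₁ < 1)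
    (S : ℝ → ℝ)
    (hS : S = fun t₂ => g₁ * (μ * stdCdf ((μ - t₂) / σ₂) +
        (μ * F₁ + σ₁ * f₁) * (1 - stdCdf ((μ - t₂) / σ₂))) +
      g₂ * (μ * F₁ + (μ * stdCdf ((μ - t₂) / σ₂) + σ₂ * stdPdf ((μ - t₂) / σ₂)) * (1 - F₁))) :
    ∀ t₂ : ℝ, t₂ ≠ -(g₁ / g₂) * (μ - σ₁ * f₁ / (1 - F₁)) →
      S t₂ < S (-(g₁ / g₂) * (μ - σ₁ * f₁ / (1 - F₁))) := by
  intro t₂ ht₂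
  set t₀ := -(g₁ / g₂) * (μ - σ₁ * f₁ / (1 - F₁)) with ht₀
  have hreject : 0 < 1 - F₁ := sub_pos.2 hF₁
  have hcost : g₂ * (1 - F₁) * t₀ = -g₁ * (μ * (1 - F₁) - σ₁ * f₁) := by
    rw [ht₀]
    field_simp
  have hS_eq (t : ℝ) : S t = g₁ * (μ * F₁ + σ₁ * f₁) + g₂ * (μ * F₁) +
      g₂ * (1 - F₁) * normalPartialExcess μ σ₂ t₀ t := by
    simp only [hS, normalPartialExcess]
    linear_combination stdCdf ((μ - t) / σ₂) * hcost
  rw [hS_eq, hS_eq]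
  gcongr
  exact normalPartialExcess_lt_self hσ₂ ht₂

/-- Proposition 4: under the unanimous rejection group rule, the expected capital increment
of the whole society `S(t₂) = g₁·(μ·Φ((μ−t₂)/σ₂) + (μ·F₁ + σ₁·f₁)·(1 − Φ((μ−t₂)/σ₂))) +
g₂·(μ·F₁ + (μ·Φ((μ−t₂)/σ₂) + σ₂·φ((μ−t₂)/σ₂))·(1 − F₁))` attains a strict global
maximum at the unique point `t₂⁰ = −(g₁/g₂)·(μ − σ₁·f₁/(1 − F₁))`. -/
theorem society_max_unanimous_rejection
    (μ σ : ℝ) (hσ : 0 < σ) (g₁ g₂ : ℕ) (hg₁ : 1 ≤ g₁) (hg₂ : 1 ≤ g₂) (t₁ : ℝ)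
    (σ₁ σ₂ : ℝ) (hσ₁ : σ₁ = σ / Real.sqrt g₁) (hσ₂ : σ₂ = σ / Real.sqrt g₂)
    (F₁ f₁ : ℝ) (hF₁ : F₁ = stdCdf ((μ - t₁) / σ₁)) (hf₁ : f₁ = stdPdf ((μ - t₁) / σ₁))
    (S : ℝ → ℝ)
    (hS : S = fun t₂ => (g₁ : ℝ) * (μ * stdCdf ((μ - t₂) / σ₂) +
        (μ * F₁ + σ₁ * f₁) * (1 - stdCdf ((μ - t₂) / σ₂))) +
      (g₂ : ℝ) * (μ * F₁ + (μ * stdCdf ((μ - t₂) / σ₂) + σ₂ * stdPdf ((μ - t₂) / σ₂)) *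
        (1 - F₁))) :
    ∀ t₂ : ℝ, t₂ ≠ -((g₁ : ℝ) / g₂) * (μ - σ₁ * f₁ / (1 - F₁)) →
      S t₂ < S (-((g₁ : ℝ) / g₂) * (μ - σ₁ * f₁ / (1 - F₁))) := by
  have hσ₂_pos : 0 < σ₂ := by rw [hσ₂]; positivity
  exact society_max_unanimous_rejection_general μ σ₁ σ₂ hσ₂_pos g₁ g₂ (by positivity) F₁ f₁
    (hF₁ ▸ stdCdf_lt_one _) S hS
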